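/- Let T > 0 and let p, q ∈ C¹([0,T]; ℝ). Set D := {(x,t) : 0 ≤ x ≤ T, 0 ≤ t ≤ 2T−x} and Σ̄ := {(x,t) : 0 ≤ x ≤ T, x ≤ t ≤ 2T−x}. Then there exists w : Σ̄ → ℂ², C¹ on Σ̄, with w₁(0,t) = 0 for all t ∈ [0,2T], such that for every f ∈ C¹([0,2T]; ℂ) with f(0) = f′(0) = 0, the function u^f(x,t) := f(t−x)·(1,i)ᵀ + ∫_x^t f(t−s) w(x,s) ds is the unique C¹ function on D satisfying i ∂u/∂t + J ∂u/∂x + V(x) u = 0 on D, u(x,t) = 0 whenever t < x, and u₁(0,t) = f(t) for 0 ≤ t ≤ 2T. -/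

import Mathlib

/-!
In the characteristic coordinates `ξ = x + t`, `η = t - x`, and for the combinations
`a = (u₁ - i u₂) / 2`, `b = (u₁ + i u₂) / 2`, the Dirac equation becomes the system
`∂a/∂ξ = ρ₂(ξ - η) b`, `∂b/∂η = ρ₁(ξ - η) a` with
`ρ₁(y) = (i/2) (p(y/2) + i q(y/2))` and `ρ₂(y) = (i/2) (p(y/2) - i q(y/2))`.
The boundary condition `u₁ = 0` on `x = 0` reads `a = -b` on the diagonal `ξ = η`.

*Existence.* After extending `p`, `q` to compactly supported `C¹` functions on the line, the kernel
`W` is the solution of this system with `a = -b` on the diagonal and `b(ξ, 0) = ρ₁(ξ)`. The value on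
`η = 0`, that is on `t = x`, is chosen so that `i W - J W + V (1, i)ᵀ = 0` there. Integrating the
system gives an integral equation for `b`, which is a contraction in an exponentially weighted sup
norm on the plane (`exists_goursat_fixed`); the integral formulas then yield `C¹` regularity
(`exists_goursat`, `exists_kernel`). Applying the Dirac operator to the Duhamel formula with this
`W`, every term cancels (`usol_solves`). Since `f(0) = f'(0) = 0`, the datum `f` extended by zero to
`t < 0` agrees up to time `2T` with a `C¹` function on the line, so no regularity is lost at the
front `t = x`.

*Uniqueness.* The difference of two solutions vanishes for `t < x`, hence by continuity on `t = x`.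
On the triangle `0 ≤ η ≤ ξ ≤ 2T` it solves the homogeneous system with `a = -b` on the diagonal and
`b = 0` on `η = 0`, and a maximum estimate for `|b|` with an exponential weight in `η` shows that it
is zero (`goursat_unique`, `homogeneous_unique`).
-/

open MeasureTheory Set

noncomputable section

/-- The matrix `J = [[0,1],[-1,0]]`. -/
def Jmat : Matrix (Fin 2) (Fin 2) ℂ := !![0, 1; -1, 0]

/-- The potential matrix `V(x) = [[p x, q x],[q x, -p x]]`. -/
def Vmat (p q : ℝ → ℝ) (x : ℝ) : Matrix (Fin 2) (Fin 2) ℂ :=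
  !![(p x : ℂ), (q x : ℂ); (q x : ℂ), -(p x : ℂ)]

/-- The domain `D = {(x,t) : 0 ≤ x ≤ T, 0 ≤ t ≤ 2T - x}`. -/
def Dext (T : ℝ) : Set (ℝ × ℝ) := {z | 0 ≤ z.1 ∧ z.1 ≤ T ∧ 0 ≤ z.2 ∧ z.2 ≤ 2 * T - z.1}

/-- The domain `Σ̄ = {(x,t) : 0 ≤ x ≤ T, x ≤ t ≤ 2T - x}`. -/
def SigmaBar (T : ℝ) : Set (ℝ × ℝ) := {z | 0 ≤ z.1 ∧ z.1 ≤ T ∧ z.1 ≤ z.2 ∧ z.2 ≤ 2 * T - z.1}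

/-- The Dirac equation `i ∂u/∂t + J ∂u/∂x + V u = 0` holding at every point of `D`,
partial derivatives being taken within `D`. -/
def DiracOn (p q : ℝ → ℝ) (D : Set (ℝ × ℝ)) (u : ℝ × ℝ → Fin 2 → ℂ) : Prop :=
  ∀ z ∈ D,
    Complex.I • (fderivWithin ℝ u D z ((0 : ℝ), (1 : ℝ)))
      + Jmat.mulVec (fderivWithin ℝ u D z ((1 : ℝ), (0 : ℝ)))
      + (Vmat p q z.1).mulVec (u z) = 0

/-- The Duhamel-type representation
`u^f(x,t) = f(t-x)·(1,i)ᵀ + ∫_x^t f(t-s) w(x,s) ds`. -/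
def usol (f : ℝ → ℂ) (w : ℝ × ℝ → Fin 2 → ℂ) (z : ℝ × ℝ) : Fin 2 → ℂ :=
  f (z.2 - z.1) • ![1, Complex.I] + ∫ s in z.1..z.2, f (z.2 - s) • w (z.1, s)

/-! ### C¹ extensions and parametric primitives -/

/-- A function that is `C¹` on `[a, b]` extends to a `C¹` function on the line: integrate the
derivative, extended by its end values. Left of `a` the extension is affine. -/
theorem exists_contDiff_extension {E : Type*} [NormedAddCommGroup E] [NormedSpace ℝ E]
    [CompleteSpace E] {a b : ℝ} (hab : a < b) {h : ℝ → E} (hh : ContDiffOn ℝ 1 h (Icc a b)) :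
    ∃ H : ℝ → E, ContDiff ℝ 1 H ∧ EqOn H h (Icc a b) ∧
      ∀ t ≤ a, H t = h a + (t - a) • derivWithin h (Icc a b) a := by
  have hud : UniqueDiffOn ℝ (Icc a b) := uniqueDiffOn_Icc hab
  have hcd : ContinuousOn (derivWithin h (Icc a b)) (Icc a b) :=
    hh.continuousOn_derivWithin hud le_rfl
  set g : ℝ → E := IccExtend hab.le ((Icc a b).domRestrict (derivWithin h (Icc a b))) with hg
  have hgc : Continuous g := hcd.domRestrict.Icc_extend'
  have hge : ∀ x ∈ Icc a b, g x = derivWithin h (Icc a b) x := fun x hx => by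
    rw [hg, IccExtend_of_mem _ _ hx]; rfl
  have hd : ∀ t, HasDerivAt (fun t => h a + ∫ s in a..t, g s) (g t) t := fun t =>
    (hgc.integral_hasStrictDerivAt a t).hasDerivAt.const_add _
  refine ⟨fun t => h a + ∫ s in a..t, g s, ?_, ?_, ?_⟩
  · rw [contDiff_one_iff_deriv]
    refine ⟨fun t => (hd t).differentiableAt, ?_⟩
    rw [show deriv (fun t => h a + ∫ s in a..t, g s) = g from funext fun t => (hd t).deriv]
    exact hgc
  · intro t ht
    have : ∫ s in a..t, g s = h t - h a := by
      refine intervalIntegral.integral_eq_sub_of_hasDeriv_right_of_le ht.1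
        (hh.continuousOn.mono (Icc_subset_Icc le_rfl ht.2)) (fun x hx => ?_)
        (hgc.intervalIntegrable _ _)
      have hx' : x ∈ Ioo a b := ⟨hx.1, hx.2.trans_le ht.2⟩
      have := (hh.differentiableOn one_ne_zero x (Ioo_subset_Icc_self hx')).hasDerivWithinAt
      rw [← hge x (Ioo_subset_Icc_self hx')] at this
      exact (this.hasDerivAt (Icc_mem_nhds hx'.1 hx'.2)).hasDerivWithinAt
    simp only [this]; abel
  · intro t ht
    have : ∫ s in a..t, g s = ∫ s in a..t, derivWithin h (Icc a b) a := by
      refine intervalIntegral.integral_congr fun s hs => ?_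
      rw [uIcc_of_ge ht] at hs
      simp only [hg, IccExtend_of_le_left _ _ hs.2]; rfl
    simp only [this, intervalIntegral.integral_const]

/-- Compact support is obtained by multiplying a `C¹` extension by a bump function that is `1` on
`[-T, T]`. -/
theorem exists_contDiff_compact_extension {T : ℝ} (hT : 0 < T) {h : ℝ → ℝ}
    (hh : ContDiffOn ℝ 1 h (Icc 0 T)) :
    ∃ H : ℝ → ℝ, ContDiff ℝ 1 H ∧ HasCompactSupport H ∧ EqOn H h (Icc 0 T) := by
  obtain ⟨G, hG, hGe, -⟩ := exists_contDiff_extension hT hh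
  let χ : ContDiffBump (0 : ℝ) := ⟨T, T + 1, hT, by linarith⟩
  refine ⟨fun x => χ x * G x, χ.contDiff.mul hG, χ.hasCompactSupport.mul_right, fun x hx => ?_⟩
  have : χ x = 1 := χ.one_of_mem_closedBall (by
    simp only [Metric.mem_closedBall, dist_zero_right, Real.norm_eq_abs, abs_of_nonneg hx.1]
    exact hx.2)
  simp only [this, one_mul, hGe hx]

/-- Leibniz rule with a variable upper limit: the derivative of `(z, b) ↦ ∫₀ᵇ g(z, s) ds`, jointly in
the parameter and the limit. -/
theorem hasFDerivAt_parametric_primitive {H E : Type*} [NormedAddCommGroup H] [NormedSpace ℝ H]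
    [ProperSpace H] [NormedAddCommGroup E] [NormedSpace ℝ E] [CompleteSpace E]
    {g : H → ℝ → E} {g' : H → ℝ → H →L[ℝ] E} (hg : Continuous (Function.uncurry g))
    (hg' : Continuous (Function.uncurry g'))
    (hd : ∀ z s, HasFDerivAt (fun z => g z s) (g' z s) z) (v : H × ℝ) :
    HasFDerivAt (fun p : H × ℝ => ∫ s in (0 : ℝ)..p.2, g p.1 s)
      ((∫ s in (0 : ℝ)..v.2, g' v.1 s).coprod
        (ContinuousLinearMap.toSpanSingleton ℝ (g v.1 v.2))) v := by
  have hgz : ∀ z, Continuous (g z) := fun z => hg.comp (Continuous.prodMk_right z)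
  have hgz' : ∀ z, Continuous (g' z) := fun z => hg'.comp (Continuous.prodMk_right z)
  have key : ∀ z b, HasFDerivAt (fun z => ∫ s in (0 : ℝ)..b, g z s)
      (∫ s in (0 : ℝ)..b, g' z s) z := by
    intro z b
    have hK : IsCompact (Metric.closedBall z 1 ×ˢ uIcc (0 : ℝ) b) :=
      (isCompact_closedBall z 1).prod isCompact_uIcc
    obtain ⟨C, hC⟩ := hK.exists_bound_of_continuousOn hg'.continuousOn
    refine intervalIntegral.hasFDerivAt_integral_of_dominated_of_fderiv_le
      (s := Metric.closedBall z 1) (bound := fun _ => C)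
      (Metric.closedBall_mem_nhds z one_pos)
      (Filter.Eventually.of_forall fun z => (hgz z).aestronglyMeasurable)
      ((hgz z).intervalIntegrable _ _) (hgz' z).aestronglyMeasurable
      (Filter.Eventually.of_forall fun t ht z' hz' => hC (z', t) ⟨hz', uIoc_subset_uIcc ht⟩)
      intervalIntegrable_const (Filter.Eventually.of_forall fun t _ z' _ => hd z' t)
  exact (hasStrictFDerivAt_uncurry_coprod (u := v)
    (f := fun z b => ∫ s in (0 : ℝ)..b, g z s)
    (f₁ := fun z b => ∫ s in (0 : ℝ)..b, g' z s)
    (f₂ := fun z b => ContinuousLinearMap.toSpanSingleton ℝ (g z b))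
    (Filter.Eventually.of_forall fun w => key w.1 w.2)
    (Filter.Eventually.of_forall fun w =>
      ((hgz w.1).integral_hasStrictDerivAt 0 w.2).hasDerivAt.hasFDerivAt)
    (intervalIntegral.continuous_parametric_primitive_of_continuous hg').continuousAt
    (((ContinuousLinearMap.toSpanSingletonCLE (𝕜 := ℝ) (E := E)).continuous.comp hg).continuousAt)).hasFDerivAt

theorem contDiff_parametric_primitive {H E : Type*} [NormedAddCommGroup H] [NormedSpace ℝ H]
    [ProperSpace H] [NormedAddCommGroup E] [NormedSpace ℝ E] [CompleteSpace E]
    {g : H → ℝ → E} {g' : H → ℝ → H →L[ℝ] E} (hg : Continuous (Function.uncurry g))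
    (hg' : Continuous (Function.uncurry g'))
    (hd : ∀ z s, HasFDerivAt (fun z => g z s) (g' z s) z) :
    ContDiff ℝ 1 (fun p : H × ℝ => ∫ s in (0 : ℝ)..p.2, g p.1 s) := by
  rw [contDiff_one_iff_hasFDerivAt]
  refine ⟨_, ?_, hasFDerivAt_parametric_primitive hg hg' hd⟩
  have h1 : Continuous fun v : H × ℝ => ∫ s in (0 : ℝ)..v.2, g' v.1 s :=
    intervalIntegral.continuous_parametric_primitive_of_continuous hg'
  have h2 : Continuous fun v : H × ℝ => ContinuousLinearMap.toSpanSingleton ℝ (g v.1 v.2) :=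
    (ContinuousLinearMap.toSpanSingletonCLE (𝕜 := ℝ) (E := E)).continuous.comp hg
  have : Continuous fun v : H × ℝ => (∫ s in (0 : ℝ)..v.2, g' v.1 s).comp (ContinuousLinearMap.fst ℝ H ℝ)
      + (ContinuousLinearMap.toSpanSingleton ℝ (g v.1 v.2)).comp (ContinuousLinearMap.snd ℝ H ℝ) := by
    exact (h1.clm_comp continuous_const).add (h2.clm_comp continuous_const)
  refine this.congr fun v => ContinuousLinearMap.ext fun x => ?_
  simp

/-! ### Uniqueness for the characteristic system -/

/-- Uniqueness for the homogeneous characteristic system `∂a/∂ξ = k₁ b`, `∂b/∂η = k₂ a` on the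
triangle `0 ≤ η ≤ ξ ≤ M`, with `a = -b` on the diagonal and `b = 0` on `η = 0`. The maximum `S` of
`|b| e^{-lη}` controls `a`, hence `∂b/∂η`; integrating in `η` gains a factor `1 / l`, which for large
`l` forces `S = 0`. -/
theorem goursat_unique {M R : ℝ} (hR : 0 ≤ R) {a b k₁ k₂ : ℝ → ℝ → ℂ}
    (hbc : ContinuousOn ↿b {z : ℝ × ℝ | 0 ≤ z.2 ∧ z.2 ≤ z.1 ∧ z.1 ≤ M})
    (hk₁ : ∀ ξ η, 0 ≤ η → η ≤ ξ → ξ ≤ M → ‖k₁ ξ η‖ ≤ R)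
    (hk₂ : ∀ ξ η, 0 ≤ η → η ≤ ξ → ξ ≤ M → ‖k₂ ξ η‖ ≤ R)
    (ha : ∀ ξ η, 0 ≤ η → η ≤ ξ → ξ ≤ M →
      HasDerivWithinAt (fun s => a s η) (k₁ ξ η * b ξ η) (Icc η M) ξ)
    (hb : ∀ ξ η, 0 ≤ η → η ≤ ξ → ξ ≤ M →
      HasDerivWithinAt (fun s => b ξ s) (k₂ ξ η * a ξ η) (Icc 0 ξ) η)
    (hdiag : ∀ η, 0 ≤ η → η ≤ M → a η η = -b η η)
    (hzero : ∀ ξ, 0 ≤ ξ → ξ ≤ M → b ξ 0 = 0) :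
    ∀ ξ η, 0 ≤ η → η ≤ ξ → ξ ≤ M → a ξ η = 0 ∧ b ξ η = 0 := by
  intro ξ' η' hη' hξ' hM'
  have hM : 0 ≤ M := by linarith
  -- `a` costs a factor `1 + R M` and `∂b/∂η` a further factor `R`; the rate `l` must exceed `C`
  set C : ℝ := R * (1 + R * M) with hC
  have hC0 : 0 ≤ C := by positivity
  set l : ℝ := 2 * C + 1 with hl
  have hl0 : 0 < l := by positivity
  set Δ : Set (ℝ × ℝ) := {z | 0 ≤ z.2 ∧ z.2 ≤ z.1 ∧ z.1 ≤ M} with hΔ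
  have hΔc : IsCompact Δ := by
    refine (isCompact_Icc (a := ((0 : ℝ), (0 : ℝ))) (b := (M, M))).of_isClosed_subset ?_ ?_
    · exact (isClosed_le continuous_const continuous_snd).inter
        ((isClosed_le continuous_snd continuous_fst).inter
          (isClosed_le continuous_fst continuous_const))
    · rintro ⟨x, y⟩ ⟨h1, h2, h3⟩
      simp only at h1 h2 h3
      exact ⟨⟨h1.trans h2, h1⟩, ⟨h3, h2.trans h3⟩⟩
  have hcont : ContinuousOn (fun z : ℝ × ℝ => ‖b z.1 z.2‖ * Real.exp (-(l * z.2))) Δ := by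
    refine ContinuousOn.mul hbc.norm ?_
    fun_prop
  obtain ⟨⟨ξ₀, η₀⟩, ⟨h01, h02, h03⟩, hmax⟩ :=
    hΔc.exists_isMaxOn ⟨(ξ', η'), hη', hξ', hM'⟩ hcont
  simp only at h01 h02 h03
  set S : ℝ := ‖b ξ₀ η₀‖ * Real.exp (-(l * η₀)) with hS
  have hS0 : 0 ≤ S := by positivity
  have hbS : ∀ ξ η, 0 ≤ η → η ≤ ξ → ξ ≤ M → ‖b ξ η‖ ≤ S * Real.exp (l * η) := by
    intro ξ η h1 h2 h3
    have : ‖b ξ η‖ * Real.exp (-(l * η)) ≤ S := hmax (show (ξ, η) ∈ Δ from ⟨h1, h2, h3⟩)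
    rwa [Real.exp_neg, ← div_eq_mul_inv, div_le_iff₀ (Real.exp_pos _)] at this
  have haS : ∀ ξ η, 0 ≤ η → η ≤ ξ → ξ ≤ M → ‖a ξ η‖ ≤ (1 + R * M) * (S * Real.exp (l * η)) := by
    intro ξ η h1 h2 h3
    have hder : ∀ x ∈ Icc η ξ, HasDerivWithinAt (fun s => a s η) (k₁ x η * b x η) (Icc η ξ) x :=
      fun x hx => (ha x η h1 hx.1 (hx.2.trans h3)).mono (Icc_subset_Icc le_rfl h3)
    have h4 := norm_image_sub_le_of_norm_deriv_le_segment' (C := R * (S * Real.exp (l * η)))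
      hder (fun x hx => by
        rw [norm_mul]
        have h5 := hx.2.le.trans h3
        exact mul_le_mul (hk₁ x η h1 hx.1 h5) (hbS x η h1 hx.1 h5) (norm_nonneg _) hR) ξ
        ⟨h2, le_rfl⟩
    have h5 : ‖a η η‖ ≤ S * Real.exp (l * η) := by
      rw [hdiag η h1 (h2.trans h3), norm_neg]; exact hbS η η h1 le_rfl (h2.trans h3)
    have h6 : R * (S * Real.exp (l * η)) * (ξ - η) ≤ R * (S * Real.exp (l * η)) * M :=
      mul_le_mul_of_nonneg_left (by linarith) (by positivity)
    have h7 : ‖a ξ η‖ ≤ ‖a η η‖ + ‖a ξ η - a η η‖ := by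
      simpa using norm_add_le (a η η) (a ξ η - a η η)
    nlinarith
  have hb2 : ∀ ξ η, 0 ≤ η → η ≤ ξ → ξ ≤ M → ‖b ξ η‖ ≤ C * S / l * Real.exp (l * η) := by
    intro ξ η h1 h2 h3
    have hder : ∀ x ∈ Icc 0 ξ, HasDerivWithinAt (fun s => b ξ s) (k₂ ξ x * a ξ x) (Icc 0 ξ) x :=
      fun x hx => hb ξ x hx.1 hx.2 h3
    have hB : ∀ x, HasDerivAt (fun s => C * S / l * Real.exp (l * s))
        (C * (S * Real.exp (l * x))) x := fun x => by
      have := (((hasDerivAt_id x).const_mul l).exp.const_mul (C * S / l))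
      exact this.congr_deriv (by simp only [id, mul_one]; field_simp)
    refine image_norm_le_of_norm_deriv_right_le_deriv_boundary' (a := 0) (b := ξ)
      (f' := fun x => k₂ ξ x * a ξ x)
      (B := fun s => C * S / l * Real.exp (l * s)) (B' := fun x => C * (S * Real.exp (l * x)))
      (fun x hx => (hder x hx).continuousWithinAt) (fun x hx => ?_) ?_
      (fun x _ => (hB x).continuousAt.continuousWithinAt) (fun x _ => (hB x).hasDerivWithinAt)
      (fun x hx => ?_) ⟨h1, h2⟩
    · exact (hder x (Ico_subset_Icc_self hx)).mono_of_mem_nhdsWithin (Icc_mem_nhdsGE_of_mem hx)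
    · rw [hzero ξ (h1.trans h2) h3, norm_zero]; positivity
    · rw [norm_mul, hC, mul_assoc]
      exact mul_le_mul (hk₂ ξ x hx.1 hx.2.le h3) (haS ξ x hx.1 hx.2.le h3) (norm_nonneg _) hR
  have hSz : S = 0 := by
    have h1 := hb2 ξ₀ η₀ h01 h02 h03
    have h2 : S ≤ C * S / l := by
      have h3 : S = ‖b ξ₀ η₀‖ / Real.exp (l * η₀) := by
        rw [hS, Real.exp_neg, div_eq_mul_inv]
      rw [h3, div_le_iff₀ (Real.exp_pos _), ← h3]
      exact h1
    rw [le_div_iff₀ hl0, hl] at h2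
    nlinarith
  constructor
  · have := haS ξ' η' hη' hξ' hM'
    simpa [hSz] using this
  · have := hbS ξ' η' hη' hξ' hM'
    simpa [hSz] using this

/-! ### Existence for the characteristic system -/

/-- Integrating from `0` an exponentially weighted bound gains the factor `1 / l`; this is what makes
the integral operator below a contraction. -/
theorem norm_integral_le_exp_abs {f : ℝ → ℂ} {K l : ℝ} (hl : 0 < l) (hK : 0 ≤ K)
    (hf : ∀ s, ‖f s‖ ≤ K * Real.exp (l * |s|)) (η : ℝ) :
    ‖∫ s in (0 : ℝ)..η, f s‖ ≤ K / l * Real.exp (l * |η|) := by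
  have key : ∀ (g : ℝ → ℂ), (∀ s, ‖g s‖ ≤ K * Real.exp (l * |s|)) → ∀ y, 0 ≤ y →
      ‖∫ s in (0 : ℝ)..y, g s‖ ≤ K / l * Real.exp (l * y) := by
    intro g hg y hy
    have hd : ∀ x, HasDerivAt (fun s => K / l * Real.exp (l * s)) (K * Real.exp (l * x)) x :=
      fun x => by
        have := (((hasDerivAt_id x).const_mul l).exp.const_mul (K / l))
        exact this.congr_deriv (by simp only [id, mul_one]; field_simp)
    have hc : Continuous fun s : ℝ => K * Real.exp (l * s) := by fun_prop
    calc ‖∫ s in (0 : ℝ)..y, g s‖ ≤ ∫ s in (0 : ℝ)..y, K * Real.exp (l * s) := by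
          refine intervalIntegral.norm_integral_le_of_norm_le hy
            (Filter.Eventually.of_forall fun s hs => ?_) (hc.intervalIntegrable _ _)
          simpa [abs_of_pos hs.1] using hg s
      _ = K / l * Real.exp (l * y) - K / l * Real.exp (l * 0) :=
          intervalIntegral.integral_eq_sub_of_hasDerivAt (fun x _ => hd x)
            (hc.intervalIntegrable _ _)
      _ ≤ _ := sub_le_self _ (by positivity)
  rcases le_total 0 η with h | h
  · rw [abs_of_nonneg h]; exact key f hf η h
  · have h1 := key (fun s => f (-s)) (fun s => by simpa using hf (-s)) (-η) (by linarith)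
    rw [intervalIntegral.integral_comp_neg, neg_neg, neg_zero, intervalIntegral.integral_symm,
      norm_neg] at h1
    rwa [abs_of_nonpos h]

/-- The component `α` of the characteristic system determined by `β`:
`α(ξ, η) = -β(η, η) + ∫_η^ξ ρ(s - η) β(s, η) ds`, the solution of `∂α/∂ξ = ρ(ξ - η) β` with
`α = -β` on the diagonal. The integral is written as a difference of integrals from `0`, so that
parametric primitives with a fixed lower limit apply. -/
def goursatA (ρ : ℝ → ℂ) (β : ℝ × ℝ → ℂ) (z : ℝ × ℝ) : ℂ :=
  -β (z.2, z.2) + ((∫ s in (0 : ℝ)..z.1, ρ (s - z.2) * β (s, z.2))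
    - ∫ s in (0 : ℝ)..z.2, ρ (s - z.2) * β (s, z.2))

theorem continuous_goursatA {ρ : ℝ → ℂ} (hρ : Continuous ρ) {β : ℝ × ℝ → ℂ} (hβ : Continuous β) :
    Continuous (goursatA ρ β) := by
  unfold goursatA
  refine (by fun_prop : Continuous fun z : ℝ × ℝ => -β (z.2, z.2)).add (Continuous.sub ?_ ?_)
  · exact intervalIntegral.continuous_parametric_intervalIntegral_of_continuous
      (f := fun (z : ℝ × ℝ) s => ρ (s - z.2) * β (s, z.2)) (by unfold Function.uncurry; fun_prop) continuous_fst
  · exact intervalIntegral.continuous_parametric_intervalIntegral_of_continuous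
      (f := fun (z : ℝ × ℝ) s => ρ (s - z.2) * β (s, z.2)) (by unfold Function.uncurry; fun_prop) continuous_snd

theorem goursatA_sub {ρ : ℝ → ℂ} (hρ : Continuous ρ) {β γ : ℝ × ℝ → ℂ} (hβ : Continuous β)
    (hγ : Continuous γ) (z : ℝ × ℝ) :
    goursatA ρ (fun z => β z - γ z) z = goursatA ρ β z - goursatA ρ γ z := by
  have : ∀ x, (∫ s in (0 : ℝ)..x, ρ (s - z.2) * (β (s, z.2) - γ (s, z.2)))
      = (∫ s in (0 : ℝ)..x, ρ (s - z.2) * β (s, z.2))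
        - ∫ s in (0 : ℝ)..x, ρ (s - z.2) * γ (s, z.2) := by
    intro x
    rw [← intervalIntegral.integral_sub]
    · simp only [mul_sub]
    · exact Continuous.intervalIntegrable (by fun_prop) _ _
    · exact Continuous.intervalIntegrable (by fun_prop) _ _
  simp only [goursatA, this]; ring

/-- A weight depending on `η` alone passes through `goursatA`, which only integrates in `ξ`. -/
theorem goursatA_weight (ρ : ℝ → ℂ) (β : ℝ × ℝ → ℂ) (e : ℝ → ℂ) (z : ℝ × ℝ) :
    goursatA ρ (fun z => e z.2 * β z) z = e z.2 * goursatA ρ β z := by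
  have : ∀ x, (∫ s in (0 : ℝ)..x, ρ (s - z.2) * (e z.2 * β (s, z.2)))
      = e z.2 * (∫ s in (0 : ℝ)..x, ρ (s - z.2) * β (s, z.2)) := by
    intro x
    rw [← intervalIntegral.integral_const_mul]
    simp only [mul_left_comm]
  simp only [goursatA, this]; ring

/-- `goursatA` is bounded in the sup norm on the whole plane, because `ρ` is integrable. -/
theorem norm_goursatA_le {ρ : ℝ → ℂ} (hρ : Continuous ρ) (hρc : HasCompactSupport ρ)
    {β : ℝ × ℝ → ℂ} {B : ℝ} (hB : ∀ z, ‖β z‖ ≤ B) (z : ℝ × ℝ) :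
    ‖goursatA ρ β z‖ ≤ (1 + 2 * ∫ y, ‖ρ y‖) * B := by
  have hint : Integrable (fun y => ‖ρ y‖) := (hρ.integrable_of_hasCompactSupport hρc).norm
  have hint' : Integrable (fun s => ‖ρ (s - z.2)‖ * B) := (hint.comp_sub_right z.2).mul_const B
  have hB0 : 0 ≤ B := (norm_nonneg _).trans (hB z)
  have key : ∀ x, ‖∫ s in (0 : ℝ)..x, ρ (s - z.2) * β (s, z.2)‖ ≤ (∫ y, ‖ρ y‖) * B := by
    intro x
    calc _ ≤ ∫ s in uIoc 0 x, ‖ρ (s - z.2)‖ * B := by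
          rw [intervalIntegral.norm_intervalIntegral_eq]
          refine norm_integral_le_of_norm_le hint'.integrableOn
            (Filter.Eventually.of_forall fun s => ?_)
          rw [norm_mul]
          exact mul_le_mul_of_nonneg_left (hB _) (norm_nonneg _)
      _ ≤ ∫ s, ‖ρ (s - z.2)‖ * B :=
          setIntegral_le_integral hint' (Filter.Eventually.of_forall fun s => by positivity)
      _ = _ := by
          rw [integral_mul_const, integral_sub_right_eq_self (fun y => ‖ρ y‖)]
  have h1 := key z.1
  have h2 := key z.2
  have h3 := hB (z.2, z.2)
  rw [← norm_neg] at h3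
  unfold goursatA
  have h4 := norm_add_le (-β (z.2, z.2)) ((∫ s in (0 : ℝ)..z.1, ρ (s - z.2) * β (s, z.2))
    - ∫ s in (0 : ℝ)..z.2, ρ (s - z.2) * β (s, z.2))
  have h5 := norm_sub_le (∫ s in (0 : ℝ)..z.1, ρ (s - z.2) * β (s, z.2))
    (∫ s in (0 : ℝ)..z.2, ρ (s - z.2) * β (s, z.2))
  linarith

/-- Solution on the whole plane of the integral equation for `β`. Writing `β = e^{l|η|} γ` with `l`
large turns it into a fixed-point equation for a contraction of the bounded continuous functions. -/
theorem exists_goursat_fixed {ρ₁ ρ₂ c : ℝ → ℂ} (h₁ : Continuous ρ₁) (h₁c : HasCompactSupport ρ₁)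
    (h₂ : Continuous ρ₂) (h₂c : HasCompactSupport ρ₂) (hc : Continuous c)
    (hcc : HasCompactSupport c) :
    ∃ β : ℝ × ℝ → ℂ, Continuous β ∧
      ∀ z, β z = c z.1 + ∫ s in (0 : ℝ)..z.2, ρ₁ (z.1 - s) * goursatA ρ₂ β (z.1, s) := by
  obtain ⟨R, hR⟩ := h₁c.exists_bound_of_continuous h₁
  obtain ⟨Bc, hBc⟩ := hcc.exists_bound_of_continuous hc
  have hR0 : 0 ≤ R := (norm_nonneg _).trans (hR 0)
  have hBc0 : 0 ≤ Bc := (norm_nonneg _).trans (hBc 0)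
  have hN : 0 ≤ ∫ y, ‖ρ₂ y‖ := integral_nonneg fun _ => norm_nonneg _
  -- the rate `l` exceeds twice the norm bound `C` of the unweighted integrand
  set C : ℝ := R * (1 + 2 * ∫ y, ‖ρ₂ y‖) with hC
  have hC0 : 0 ≤ C := by positivity
  set l : ℝ := 2 * C + 1 with hl
  have hl0 : 0 < l := by positivity
  let e : ℝ → ℂ := fun s => (Real.exp (l * |s|) : ℂ)
  have hec : Continuous e := by
    refine Complex.continuous_ofReal.comp ?_
    fun_prop
  have hen : ∀ s, ‖e s‖ = Real.exp (l * |s|) := fun s => by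
    simp only [e, Complex.norm_real, Real.norm_eq_abs, abs_of_pos (Real.exp_pos _)]
  have he0 : ∀ s, e s ≠ 0 := fun s => by
    rw [← norm_ne_zero_iff, hen]; exact (Real.exp_pos _).ne'
  let L : (ℝ × ℝ → ℂ) → ℝ × ℝ → ℂ := fun γ z =>
    (e z.2)⁻¹ * ∫ s in (0 : ℝ)..z.2, ρ₁ (z.1 - s) * (e s * goursatA ρ₂ γ (z.1, s))
  have hLc : ∀ γ, Continuous γ → Continuous (L γ) := by
    intro γ hγ
    have hA := continuous_goursatA h₂ hγ
    refine Continuous.mul ((hec.comp continuous_snd).inv₀ fun z => he0 _) ?_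
    refine intervalIntegral.continuous_parametric_intervalIntegral_of_continuous
      (f := fun (z : ℝ × ℝ) s => ρ₁ (z.1 - s) * (e s * goursatA ρ₂ γ (z.1, s))) ?_ continuous_snd
    unfold Function.uncurry
    fun_prop
  have hLs : ∀ γ δ : ℝ × ℝ → ℂ, Continuous γ → Continuous δ → ∀ z,
      L (fun z => γ z - δ z) z = L γ z - L δ z := by
    intro γ δ hγ hδ z
    have hA := continuous_goursatA h₂ hγ
    have hA' := continuous_goursatA h₂ hδ
    simp only [L]
    rw [← mul_sub, ← intervalIntegral.integral_sub]
    · simp only [goursatA_sub h₂ hγ hδ, mul_sub]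
    · exact Continuous.intervalIntegrable (by fun_prop) _ _
    · exact Continuous.intervalIntegrable (by fun_prop) _ _
  have hLb : ∀ (γ : ℝ × ℝ → ℂ) (B : ℝ), (∀ z, ‖γ z‖ ≤ B) → ∀ z, ‖L γ z‖ ≤ 1 / 2 * B := by
    intro γ B hB z
    have hB0 : 0 ≤ B := (norm_nonneg _).trans (hB z)
    have h1 := norm_integral_le_exp_abs (K := C * B) hl0 (by positivity)
      (f := fun s => ρ₁ (z.1 - s) * (e s * goursatA ρ₂ γ (z.1, s))) (fun s => by
        rw [norm_mul, norm_mul, hen]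
        calc _ ≤ R * (Real.exp (l * |s|) * ((1 + 2 * ∫ y, ‖ρ₂ y‖) * B)) := by
              gcongr
              · exact hR _
              · exact norm_goursatA_le h₂ h₂c hB _
          _ = _ := by rw [hC]; ring) z.2
    simp only [L]
    rw [norm_mul, norm_inv, hen, inv_mul_le_iff₀ (Real.exp_pos _)]
    refine h1.trans ?_
    rw [mul_comm]
    gcongr
    rw [div_le_iff₀ hl0, hl]
    nlinarith
  -- the affine contraction `γ ↦ e⁻¹ c + L γ`
  have hcb : ∀ z : ℝ × ℝ, ‖(e z.2)⁻¹ * c z.1‖ ≤ Bc := fun z => by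
    rw [norm_mul, norm_inv, hen]
    have : 1 ≤ Real.exp (l * |z.2|) := Real.one_le_exp (by positivity)
    calc _ ≤ 1 * Bc := mul_le_mul (inv_le_one_of_one_le₀ this) (hBc _) (norm_nonneg _) zero_le_one
      _ = Bc := one_mul _
  let Φ : BoundedContinuousFunction (ℝ × ℝ) ℂ → BoundedContinuousFunction (ℝ × ℝ) ℂ := fun γ =>
    BoundedContinuousFunction.ofNormedAddCommGroup (fun z => (e z.2)⁻¹ * c z.1 + L γ z)
      ((((hec.comp continuous_snd).inv₀ fun z => he0 _).mul (hc.comp continuous_fst)).add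
        (hLc γ γ.continuous))
      (Bc + 1 / 2 * ‖γ‖)
      (fun z => (norm_add_le _ _).trans (add_le_add (hcb z) (hLb γ _ γ.norm_coe_le_norm z)))
  have hΦ : ContractingWith (1 / 2) Φ := by
    refine ⟨by norm_num, LipschitzWith.of_dist_le_mul fun γ δ => ?_⟩
    rw [BoundedContinuousFunction.dist_le (by positivity)]
    intro z
    have : Φ γ z - Φ δ z = L (fun z => γ z - δ z) z := by
      rw [hLs γ δ γ.continuous δ.continuous z]
      simp only [Φ, BoundedContinuousFunction.coe_ofNormedAddCommGroup]
      ring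
    rw [dist_eq_norm, this]
    refine (hLb _ (dist γ δ) (fun z => ?_) z).trans (le_of_eq (by simp))
    rw [← dist_eq_norm]
    exact BoundedContinuousFunction.dist_coe_le_dist z
  let γ := hΦ.fixedPoint
  have hγ : ∀ z, γ z = (e z.2)⁻¹ * c z.1 + L γ z := fun z => by
    have : Φ γ = γ := hΦ.fixedPoint_isFixedPt
    conv_lhs => rw [← this]
    rfl
  refine ⟨fun z => e z.2 * γ z, (hec.comp continuous_snd).mul γ.continuous, fun z => ?_⟩
  simp only [goursatA_weight]
  rw [hγ z]
  simp only [L]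
  rw [mul_add, mul_inv_cancel_left₀ (he0 _), mul_inv_cancel_left₀ (he0 _)]

/-- Existence for the characteristic (Goursat-type) system, with `C¹` regularity. The integral
equation exhibits `β` as a parametric primitive whose integrand is differentiable in the parameter
`ξ`, since `∂α/∂ξ` is already known to exist; so `β` is `C¹`, and likewise `α`. -/
theorem exists_goursat {ρ₁ ρ₂ c : ℝ → ℂ} (h₁ : ContDiff ℝ 1 ρ₁) (h₁c : HasCompactSupport ρ₁)
    (h₂ : ContDiff ℝ 1 ρ₂) (h₂c : HasCompactSupport ρ₂) (hc : ContDiff ℝ 1 c)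
    (hcc : HasCompactSupport c) :
    ∃ α β : ℝ × ℝ → ℂ, ContDiff ℝ 1 α ∧ ContDiff ℝ 1 β ∧
      (∀ η, α (η, η) = -β (η, η)) ∧ (∀ ξ, β (ξ, 0) = c ξ) ∧
      (∀ z, fderiv ℝ α z (1, 0) = ρ₂ (z.1 - z.2) * β z) ∧
      (∀ z, fderiv ℝ β z (0, 1) = ρ₁ (z.1 - z.2) * α z) := by
  obtain ⟨β, hβ, hβe⟩ :=
    exists_goursat_fixed h₁.continuous h₁c h₂.continuous h₂c hc.continuous hcc
  set α : ℝ × ℝ → ℂ := goursatA ρ₂ β with hα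
  have hαc : Continuous α := continuous_goursatA h₂.continuous hβ
  have h₁' : Continuous (deriv ρ₁) := h₁.continuous_deriv le_rfl
  have h₂' : Continuous (deriv ρ₂) := h₂.continuous_deriv le_rfl
  have h₁c' := h₁.continuous
  have h₂c' := h₂.continuous
  have hαξ : ∀ ξ η, HasDerivAt (fun s => α (s, η)) (ρ₂ (ξ - η) * β (ξ, η)) ξ := fun ξ η => by
    have : Continuous fun s => ρ₂ (s - η) * β (s, η) := by fun_prop
    exact (((this.integral_hasStrictDerivAt 0 ξ).hasDerivAt).sub_const
      (∫ s in (0 : ℝ)..η, ρ₂ (s - η) * β (s, η))).const_add (-β (η, η))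
  have hβη : ∀ ξ η, HasDerivAt (fun s => β (ξ, s)) (ρ₁ (ξ - η) * α (ξ, η)) η := fun ξ η => by
    have : Continuous fun s => ρ₁ (ξ - s) * α (ξ, s) := by fun_prop
    have h := ((this.integral_hasStrictDerivAt 0 η).hasDerivAt).const_add (c ξ)
    refine h.congr_of_eventuallyEq (Filter.Eventually.of_forall fun s => ?_)
    exact hβe (ξ, s)
  have hβ1 : ContDiff ℝ 1 β := by
    rw [show β = _ from funext hβe]
    refine (hc.comp contDiff_fst).add ?_
    refine contDiff_parametric_primitive (H := ℝ) (g := fun ξ s => ρ₁ (ξ - s) * α (ξ, s))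
      (g' := fun ξ s => ContinuousLinearMap.toSpanSingleton ℝ
        (deriv ρ₁ (ξ - s) * α (ξ, s) + ρ₁ (ξ - s) * (ρ₂ (ξ - s) * β (ξ, s)))) ?_ ?_ ?_
    · show Continuous fun p : ℝ × ℝ => ρ₁ (p.1 - p.2) * α (p.1, p.2)
      fun_prop
    · refine (ContinuousLinearMap.toSpanSingletonCLE (𝕜 := ℝ) (E := ℂ)).continuous.comp
        (?_ : Continuous fun p : ℝ × ℝ => deriv ρ₁ (p.1 - p.2) * α (p.1, p.2)
          + ρ₁ (p.1 - p.2) * (ρ₂ (p.1 - p.2) * β (p.1, p.2)))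
      fun_prop
    · intro ξ s
      have h := ((h₁.differentiable one_ne_zero).differentiableAt (x := ξ - s)).hasDerivAt
      exact ((h.comp_sub_const ξ s).mul (hαξ ξ s)).hasFDerivAt
  have hβd : ∀ z, HasFDerivAt β (fderiv ℝ β z) z := fun z =>
    ((hβ1.differentiable one_ne_zero) z).hasFDerivAt
  have hα1 : ContDiff ℝ 1 α := by
    have hG : ContDiff ℝ 1 fun p : ℝ × ℝ => ∫ s in (0 : ℝ)..p.2, ρ₂ (s - p.1) * β (s, p.1) := by
      refine contDiff_parametric_primitive (H := ℝ) (g := fun η s => ρ₂ (s - η) * β (s, η))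
        (g' := fun η s => ContinuousLinearMap.toSpanSingleton ℝ
          (-deriv ρ₂ (s - η) * β (s, η) + ρ₂ (s - η) * (ρ₁ (s - η) * α (s, η)))) ?_ ?_ ?_
      · show Continuous fun p : ℝ × ℝ => ρ₂ (p.2 - p.1) * β (p.2, p.1)
        fun_prop
      · refine (ContinuousLinearMap.toSpanSingletonCLE (𝕜 := ℝ) (E := ℂ)).continuous.comp
          (?_ : Continuous fun p : ℝ × ℝ => -deriv ρ₂ (p.2 - p.1) * β (p.2, p.1)
            + ρ₂ (p.2 - p.1) * (ρ₁ (p.2 - p.1) * α (p.2, p.1)))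
        fun_prop
      · intro η s
        have h := ((h₂.differentiable one_ne_zero).differentiableAt (x := s - η)).hasDerivAt
        exact ((h.comp_const_sub s η).mul (hβη s η)).hasFDerivAt
    have e1 : ContDiff ℝ 1 fun z : ℝ × ℝ => β (z.2, z.2) :=
      hβ1.comp (contDiff_snd.prodMk contDiff_snd)
    have e2 := hG.comp (contDiff_snd.prodMk contDiff_fst : ContDiff ℝ 1 fun z : ℝ × ℝ => (z.2, z.1))
    have e3 := hG.comp (contDiff_snd.prodMk contDiff_snd : ContDiff ℝ 1 fun z : ℝ × ℝ => (z.2, z.2))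
    exact e1.neg.add (e2.sub e3)
  refine ⟨α, β, hα1, hβ1, fun η => ?_, fun ξ => ?_, fun z => ?_, fun z => ?_⟩
  · simp [hα, goursatA]
  · simp [hβe (ξ, 0)]
  · have h1 := (((hα1.differentiable one_ne_zero) z).hasFDerivAt).comp_hasDerivAt z.1
      ((hasDerivAt_id z.1).prodMk (hasDerivAt_const z.1 z.2))
    exact h1.unique (hαξ z.1 z.2)
  · have h1 := (hβd z).comp_hasDerivAt z.2
      ((hasDerivAt_const z.2 z.1).prodMk (hasDerivAt_id z.2))
    exact h1.unique (hβη z.1 z.2)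

/-! ### The kernel -/

/-- The Dirac equation in components. -/
theorem dirac_iff (p q : ℝ → ℝ) (x : ℝ) (a b c : Fin 2 → ℂ) :
    Complex.I • a + Jmat.mulVec b + (Vmat p q x).mulVec c = 0 ↔
      Complex.I * a 0 + b 1 + (p x * c 0 + q x * c 1) = 0 ∧
        Complex.I * a 1 - b 0 + (q x * c 0 - p x * c 1) = 0 := by
  rw [funext_iff, Fin.forall_fin_two]
  simp [Jmat, Vmat, dotProduct, Fin.sum_univ_two, sub_eq_add_neg]
  exact Iff.rfl

/-- The kernel `W`, for a `C¹` potential with compact support. It is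
`W = (α + β, i(α - β))` in the coordinates `ξ = x + t`, `η = t - x`. It solves the Dirac equation,
its first component vanishes on `x = 0`, and on `t = x` it satisfies the transport condition that
cancels the term `V (1, i)ᵀ` produced by the wave front. -/
theorem exists_kernel {p q : ℝ → ℝ} (hp : ContDiff ℝ 1 p) (hpc : HasCompactSupport p)
    (hq : ContDiff ℝ 1 q) (hqc : HasCompactSupport q) :
    ∃ W : ℝ × ℝ → Fin 2 → ℂ, ContDiff ℝ 1 W ∧ (∀ t, W (0, t) 0 = 0) ∧
      (∀ z, Complex.I • fderiv ℝ W z (0, 1) + Jmat.mulVec (fderiv ℝ W z (1, 0))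
        + (Vmat p q z.1).mulVec (W z) = 0) ∧
      ∀ x, Complex.I • W (x, x) + Jmat.mulVec (-W (x, x))
        + (Vmat p q x).mulVec ![1, Complex.I] = 0 := by
  have hpC : ContDiff ℝ 1 fun y => ((p y : ℝ) : ℂ) := Complex.ofRealCLM.contDiff.comp hp
  have hqC : ContDiff ℝ 1 fun y => ((q y : ℝ) : ℂ) := Complex.ofRealCLM.contDiff.comp hq
  have hpcC : HasCompactSupport fun y => ((p y : ℝ) : ℂ) :=
    hpc.comp_left (g := fun x : ℝ => (x : ℂ)) Complex.ofReal_zero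
  have hqcC : HasCompactSupport fun y => ((q y : ℝ) : ℂ) :=
    hqc.comp_left (g := fun x : ℝ => (x : ℂ)) Complex.ofReal_zero
  -- the coefficients of the characteristic system: `k = i` for `∂β/∂η`, `k = -i` for `∂α/∂ξ`
  have hρ : ∀ k : ℂ, ContDiff ℝ 1 (fun y : ℝ => Complex.I / 2 * (p (y / 2) + k * q (y / 2))) ∧
      HasCompactSupport (fun y : ℝ => Complex.I / 2 * (p (y / 2) + k * q (y / 2))) := by
    intro k
    have h2 : ContDiff ℝ 1 fun y : ℝ => y / 2 := contDiff_id.div_const 2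
    refine ⟨contDiff_const.mul ((hpC.comp h2).add (contDiff_const.mul (hqC.comp h2))), ?_⟩
    have h3 : HasCompactSupport fun y : ℝ => Complex.I / 2 * ((p y : ℂ) + k * q y) :=
      (hpcC.add hqcC.mul_left).mul_left
    exact h3.comp_homeomorph (Homeomorph.mulRight₀ (2⁻¹ : ℝ) (by norm_num))
  obtain ⟨α, β, hα, hβ, hdiag, hzero, hαd, hβd⟩ :=
    exists_goursat (hρ Complex.I).1 (hρ Complex.I).2 (hρ (-Complex.I)).1 (hρ (-Complex.I)).2
      (hρ Complex.I).1 (hρ Complex.I).2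
  let φ : ℝ × ℝ →L[ℝ] ℝ × ℝ :=
    (ContinuousLinearMap.fst ℝ ℝ ℝ + ContinuousLinearMap.snd ℝ ℝ ℝ).prod
      (ContinuousLinearMap.snd ℝ ℝ ℝ - ContinuousLinearMap.fst ℝ ℝ ℝ)
  have hφ : ∀ x t, φ (x, t) = (x + t, t - x) := fun x t => rfl
  let W : ℝ × ℝ → Fin 2 → ℂ := fun z => ![α (φ z) + β (φ z), Complex.I * (α (φ z) - β (φ z))]
  have hαφ : ContDiff ℝ 1 fun z => α (φ z) := hα.comp φ.contDiff
  have hβφ : ContDiff ℝ 1 fun z => β (φ z) := hβ.comp φ.contDiff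
  have hW : ContDiff ℝ 1 W := by
    rw [contDiff_pi]
    intro i
    fin_cases i
    · exact hαφ.add hβφ
    · exact contDiff_const.mul (hαφ.sub hβφ)
  have hA : ∀ z, HasFDerivAt (fun z => α (φ z)) ((fderiv ℝ α (φ z)).comp φ) z := fun z =>
    (((hα.differentiable one_ne_zero) (φ z)).hasFDerivAt).comp z φ.hasFDerivAt
  have hB : ∀ z, HasFDerivAt (fun z => β (φ z)) ((fderiv ℝ β (φ z)).comp φ) z := fun z =>
    (((hβ.differentiable one_ne_zero) (φ z)).hasFDerivAt).comp z φ.hasFDerivAt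
  have hWd : ∀ z, HasFDerivAt W (fderiv ℝ W z) z := fun z =>
    ((hW.differentiable one_ne_zero) z).hasFDerivAt
  have hW0 : ∀ z v, fderiv ℝ W z v 0 = fderiv ℝ α (φ z) (φ v) + fderiv ℝ β (φ z) (φ v) := by
    intro z v
    have h := (hasFDerivAt_pi'.1 (hWd z) 0).unique ((hA z).add (hB z))
    exact congrArg (fun L : ℝ × ℝ →L[ℝ] ℂ => L v) h
  have hW1 : ∀ z v, fderiv ℝ W z v 1
      = Complex.I * (fderiv ℝ α (φ z) (φ v) - fderiv ℝ β (φ z) (φ v)) := by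
    intro z v
    have h := (hasFDerivAt_pi'.1 (hWd z) 1).unique (((hA z).sub (hB z)).const_mul Complex.I)
    exact congrArg (fun L : ℝ × ℝ →L[ℝ] ℂ => L v) h
  have hlin1 : ∀ L : ℝ × ℝ →L[ℝ] ℂ, L (φ (0, 1)) = L (1, 0) + L (0, 1) := fun L => by
    rw [← map_add, hφ]; norm_num
  have hlin2 : ∀ L : ℝ × ℝ →L[ℝ] ℂ, L (φ (1, 0)) = L (1, 0) - L (0, 1) := fun L => by
    rw [← map_sub, hφ]; norm_num
  have hI : Complex.I * Complex.I = -1 := Complex.I_mul_I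
  refine ⟨W, hW, fun t => ?_, fun z => ?_, fun x => ?_⟩
  · have := hdiag t
    simp only [W, hφ, Matrix.cons_val_zero, zero_add, sub_zero, this]
    ring
  · have hx : ((φ z).1 - (φ z).2) / 2 = z.1 := by
      obtain ⟨x, t⟩ := z
      rw [hφ]; ring
    have e1 := hαd (φ z)
    have e2 := hβd (φ z)
    simp only [hx] at e1 e2
    rw [dirac_iff]
    simp only [hW0, hW1, hlin1, hlin2, W, e1, e2, Matrix.cons_val_zero, Matrix.cons_val_one]
    constructor
    · linear_combination (p z.1 * (α (φ z) + β (φ z))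
        + q z.1 * Complex.I * (α (φ z) - β (φ z))) * hI
    · linear_combination (Complex.I / 2 * (p z.1 + -Complex.I * q z.1) * β (φ z)
        + fderiv ℝ α (φ z) (0, 1) - fderiv ℝ β (φ z) (1, 0)
        - Complex.I / 2 * (p z.1 + Complex.I * q z.1) * α (φ z)
        + q z.1 * (α (φ z) + β (φ z))) * hI
  · have hx : φ (x, x) = (2 * x, 0) := by rw [hφ]; ext <;> simp [two_mul]
    have e1 := hzero (2 * x)
    have hxx : 2 * x / 2 = x := by ring
    rw [hxx] at e1
    rw [dirac_iff]
    simp only [hx, W, e1, Matrix.cons_val_zero, Matrix.cons_val_one, Pi.neg_apply]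
    constructor
    · linear_combination (p x + Complex.I * q x) * hI
    · linear_combination (α (2 * x, 0) - Complex.I / 2 * (p x + Complex.I * q x) + q x) * hI

/-! ### The Duhamel formula -/

/-- The Duhamel integral after the substitution `σ = t - s`: now `z` enters the integrand through `W`
and the upper limit only, and no derivative of `F` is needed to differentiate it. -/
theorem usol_eq (F : ℝ → ℂ) (W : ℝ × ℝ → Fin 2 → ℂ) (z : ℝ × ℝ) :
    usol F W z = F (z.2 - z.1) • ![1, Complex.I]
      + ∫ σ in (0 : ℝ)..(z.2 - z.1), F σ • W (z.1, z.2 - σ) := by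
  have h := intervalIntegral.integral_comp_sub_left (a := z.1) (b := z.2)
    (fun σ => F σ • W (z.1, z.2 - σ)) z.2
  simp only [sub_sub_cancel, sub_self] at h
  rw [usol, h]

/-- For a globally `C¹` datum the Duhamel formula is a global `C¹` solution. Applying the Dirac
operator gives `F'(t - x) (i e - J e)`, which vanishes for `e = (1, i)ᵀ`; a boundary term
`F(t - x) (i W(x,x) - J W(x,x) + V e)`, which vanishes by the transport condition; and an integral
that vanishes because `W` solves the equation. -/
theorem usol_solves {p q : ℝ → ℝ} {W : ℝ × ℝ → Fin 2 → ℂ} (hW : ContDiff ℝ 1 W)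
    (hWD : ∀ z, Complex.I • fderiv ℝ W z (0, 1) + Jmat.mulVec (fderiv ℝ W z (1, 0))
        + (Vmat p q z.1).mulVec (W z) = 0)
    (hWx : ∀ x, Complex.I • W (x, x) + Jmat.mulVec (-W (x, x))
        + (Vmat p q x).mulVec ![1, Complex.I] = 0)
    {F : ℝ → ℂ} (hF : ContDiff ℝ 1 F) :
    ContDiff ℝ 1 (usol F W) ∧
      ∀ z, Complex.I • fderiv ℝ (usol F W) z (0, 1) + Jmat.mulVec (fderiv ℝ (usol F W) z (1, 0))
        + (Vmat p q z.1).mulVec (usol F W z) = 0 := by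
  have hFc := hF.continuous
  have hWc := hW.continuous
  have hW' : Continuous (fderiv ℝ W) := hW.continuous_fderiv one_ne_zero
  let e : Fin 2 → ℂ := ![1, Complex.I]
  let g : ℝ × ℝ → ℝ → Fin 2 → ℂ := fun z σ => F σ • W (z.1, z.2 - σ)
  let g' : ℝ × ℝ → ℝ → ℝ × ℝ →L[ℝ] Fin 2 → ℂ := fun z σ => F σ • fderiv ℝ W (z.1, z.2 - σ)
  have hg : Continuous (Function.uncurry g) := by
    show Continuous fun p : (ℝ × ℝ) × ℝ => F p.2 • W (p.1.1, p.1.2 - p.2)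
    fun_prop
  have hg' : Continuous (Function.uncurry g') := by
    show Continuous fun p : (ℝ × ℝ) × ℝ => F p.2 • fderiv ℝ W (p.1.1, p.1.2 - p.2)
    fun_prop
  have hgd : ∀ z s, HasFDerivAt (fun z => g z s) (g' z s) z := by
    intro z s
    have h1 := (((hW.differentiable one_ne_zero) (z - (0, s))).hasFDerivAt).comp z
      ((hasFDerivAt_id z).sub_const (0, s))
    have h2 := h1.const_smul (F s)
    have e1 : ∀ z : ℝ × ℝ, z - (0, s) = (z.1, z.2 - s) := fun z => by ext <;> simp
    simp only [Function.comp_def, id, e1, ContinuousLinearMap.comp_id] at h2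
    exact h2
  let ψ : ℝ × ℝ →L[ℝ] (ℝ × ℝ) × ℝ := (ContinuousLinearMap.id ℝ (ℝ × ℝ)).prod
    (ContinuousLinearMap.snd ℝ ℝ ℝ - ContinuousLinearMap.fst ℝ ℝ ℝ)
  let δ : ℝ × ℝ →L[ℝ] ℝ := ContinuousLinearMap.snd ℝ ℝ ℝ - ContinuousLinearMap.fst ℝ ℝ ℝ
  let P : (ℝ × ℝ) × ℝ → Fin 2 → ℂ := fun v => ∫ s in (0 : ℝ)..v.2, g v.1 s
  have hP : ContDiff ℝ 1 P := contDiff_parametric_primitive hg hg' hgd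
  have hu : usol F W = fun z => F (δ z) • e + P (ψ z) := funext fun z => usol_eq F W z
  have hcd : ContDiff ℝ 1 (usol F W) := by
    rw [hu]
    exact ((hF.comp δ.contDiff).smul contDiff_const).add (hP.comp ψ.contDiff)
  refine ⟨hcd, fun z => ?_⟩
  -- `δ v` is the derivative of `t - x` in the direction `v`; at `σ = t - x` the kernel is `W (x, x)`
  set y : ℝ := z.2 - z.1 with hy
  have hFd : HasFDerivAt (fun z => F (δ z) • e)
      ((ContinuousLinearMap.toSpanSingleton ℝ (deriv F y • e)).comp δ) z := by
    have h1 : HasDerivAt (fun s => F s • e) (deriv F y • e) (δ z) :=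
      (((hF.differentiable one_ne_zero) y).hasDerivAt).smul_const e
    exact h1.hasFDerivAt.comp z δ.hasFDerivAt
  have hPd : HasFDerivAt (fun z => P (ψ z)) _ z :=
    (hasFDerivAt_parametric_primitive hg hg' hgd (ψ z)).comp z ψ.hasFDerivAt
  have hfd := (hFd.add hPd).fderiv
  have hgz' : Continuous (g' z) := hg'.comp (Continuous.prodMk_right z)
  have hgz : Continuous (g z) := hg.comp (Continuous.prodMk_right z)
  have hval : ∀ v, fderiv ℝ (usol F W) z v = δ v • (deriv F y • e)
      + ((∫ s in (0 : ℝ)..y, F s • fderiv ℝ W (z.1, z.2 - s) v) + δ v • (F y • W (z.1, z.1))) := by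
    intro v
    have h1 : (∫ s in (0 : ℝ)..y, g' z s) v
        = ∫ s in (0 : ℝ)..y, F s • fderiv ℝ W (z.1, z.2 - s) v :=
      ContinuousLinearMap.intervalIntegral_apply (hgz'.intervalIntegrable _ _) v
    have h2 : z.2 - y = z.1 := by rw [hy]; ring
    rw [hu]
    have h3 := congrArg (fun L : ℝ × ℝ →L[ℝ] (Fin 2 → ℂ) => L v) hfd
    refine h3.trans ?_
    rw [← h1, show W (z.1, z.1) = W (z.1, z.2 - y) by rw [h2]]
    rfl
  have hδ1 : δ (0, 1) = 1 := by simp [δ]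
  have hδ2 : δ (1, 0) = -1 := by simp [δ]
  rw [hval, hval, hδ1, hδ2, usol_eq, ← hy]
  let LJ := LinearMap.toContinuousLinearMap (Matrix.mulVecLin Jmat)
  let LV := LinearMap.toContinuousLinearMap (Matrix.mulVecLin (Vmat p q z.1))
  have hLJ : ∀ v, Jmat.mulVec v = LJ v := fun v => rfl
  have hLV : ∀ v, (Vmat p q z.1).mulVec v = LV v := fun v => rfl
  have hc : ∀ v, Continuous fun s => F s • fderiv ℝ W (z.1, z.2 - s) v := fun v => by fun_prop
  have hcW : Continuous fun s => F s • W (z.1, z.2 - s) := hgz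
  have hint : Complex.I • (∫ s in (0 : ℝ)..y, F s • fderiv ℝ W (z.1, z.2 - s) (0, 1))
      + LJ (∫ s in (0 : ℝ)..y, F s • fderiv ℝ W (z.1, z.2 - s) (1, 0))
      + LV (∫ s in (0 : ℝ)..y, F s • W (z.1, z.2 - s)) = 0 := by
    rw [← LJ.intervalIntegral_comp_comm ((hc _).intervalIntegrable _ _),
      ← LV.intervalIntegral_comp_comm (hcW.intervalIntegrable _ _),
      ← intervalIntegral.integral_smul, ← intervalIntegral.integral_add,
      ← intervalIntegral.integral_add]
    · refine (intervalIntegral.integral_congr (g := fun _ => 0) fun s _ => ?_).trans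
        intervalIntegral.integral_zero
      have h1 := hWD (z.1, z.2 - s)
      rw [hLJ, hLV] at h1
      change _ + LJ _ + LV _ = (0 : Fin 2 → ℂ)
      rw [map_smul, map_smul, smul_comm, ← smul_add, ← smul_add, h1, smul_zero]
    · exact Continuous.intervalIntegrable
        (((hc (0, 1)).const_smul Complex.I).add (LJ.continuous.comp (hc (1, 0)))) _ _
    · exact (LV.continuous.comp hcW).intervalIntegrable _ _
    · exact ((hc (0, 1)).const_smul Complex.I).intervalIntegrable _ _
    · exact (LJ.continuous.comp (hc _)).intervalIntegrable _ _
  have he : Complex.I • e + Jmat.mulVec (-e) = 0 := by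
    have hI : Complex.I * Complex.I = -1 := Complex.I_mul_I
    have h := dirac_iff 0 0 0 e (-e) 0
    simp only [Matrix.mulVec_zero, add_zero] at h
    rw [h]
    simp [e]
  have hx := hWx z.1
  rw [hLJ, hLV] at hx
  rw [hLJ] at he
  rw [hLJ, hLV]
  have e3 : ∀ (c : ℂ) (v : Fin 2 → ℂ), (-1 : ℝ) • (c • v) = c • (-v) := fun c v => by simp
  rw [e3, e3, one_smul, one_smul]
  change _ + LV (F y • e + _) = 0
  change _ + _ + LV e = 0 at hx
  simp only [map_add, map_smul, smul_add]
  calc _ = deriv F y • (Complex.I • e + LJ (-e))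
        + F y • (Complex.I • W (z.1, z.1) + LJ (-W (z.1, z.1)) + LV e)
        + (Complex.I • (∫ s in (0 : ℝ)..y, F s • fderiv ℝ W (z.1, z.2 - s) (0, 1))
      + LJ (∫ s in (0 : ℝ)..y, F s • fderiv ℝ W (z.1, z.2 - s) (1, 0))
      + LV (∫ s in (0 : ℝ)..y, F s • W (z.1, z.2 - s))) := by
        simp only [smul_add, smul_comm _ Complex.I]
        abel
    _ = 0 := by rw [he, hx, hint]; simp

/-! ### Uniqueness for the Dirac equation -/

theorem convex_Dext (T : ℝ) : Convex ℝ (Dext T) := by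
  rintro ⟨x, t⟩ ⟨h1, h2, h3, h4⟩ ⟨x', t'⟩ ⟨h1', h2', h3', h4'⟩ a b ha hb hab
  obtain rfl : b = 1 - a := by linarith
  simp only [Dext, mem_ofPred_eq, Prod.fst_add, Prod.snd_add, Prod.smul_fst, Prod.smul_snd,
    smul_eq_mul] at *
  refine ⟨by positivity, by nlinarith, by positivity, by nlinarith⟩

theorem uniqueDiffOn_Dext {T : ℝ} (hT : 0 < T) : UniqueDiffOn ℝ (Dext T) := by
  refine uniqueDiffOn_convex (convex_Dext T) ⟨(T / 2, T / 2), ?_⟩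
  rw [mem_interior]
  refine ⟨Ioo 0 T ×ˢ Ioo 0 T, ?_, isOpen_Ioo.prod isOpen_Ioo, ?_⟩
  · rintro ⟨x, t⟩ ⟨⟨h1, h2⟩, h3, h4⟩
    exact ⟨h1.le, h2.le, h3.le, by simp only at *; linarith⟩
  · exact ⟨⟨by simp only; linarith, by simp only; linarith⟩,
      by simp only; linarith, by simp only; linarith⟩

/-- A solution with zero boundary value that vanishes for `t < x` is zero: in characteristic
coordinates the combinations `(d₁ ∓ i d₂) / 2` satisfy the hypotheses of `goursat_unique`. -/
theorem homogeneous_unique {T : ℝ} (hT : 0 < T) {p q : ℝ → ℝ} (hp : ContinuousOn p (Icc 0 T))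
    (hq : ContinuousOn q (Icc 0 T)) {d : ℝ × ℝ → Fin 2 → ℂ} (hd : ContDiffOn ℝ 1 d (Dext T))
    (hD : DiracOn p q (Dext T) d) (h0 : ∀ z ∈ Dext T, z.2 < z.1 → d z = 0)
    (hbd : ∀ t ∈ Icc (0 : ℝ) (2 * T), d (0, t) 0 = 0) :
    ∀ z ∈ Dext T, d z = 0 := by
  have hI : Complex.I * Complex.I = -1 := Complex.I_mul_I
  obtain ⟨P, hP⟩ := isCompact_Icc.exists_bound_of_continuousOn hp
  obtain ⟨Q, hQ⟩ := isCompact_Icc.exists_bound_of_continuousOn hq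
  have hP0 : 0 ≤ P := (norm_nonneg _).trans (hP 0 ⟨le_rfl, hT.le⟩)
  have hQ0 : 0 ≤ Q := (norm_nonneg _).trans (hQ 0 ⟨le_rfl, hT.le⟩)
  have hdc : ContinuousOn d (Dext T) := hd.continuousOn
  -- the trace on the characteristic `t = x` vanishes by continuity from the region `t < x`
  have hchar : ∀ x, 0 ≤ x → x ≤ T → d (x, x) = 0 := by
    intro x hx0 hxT
    let γ : ℝ → ℝ × ℝ := fun s => ((1 - s) * x + s * T, (1 - s) * x)
    have hγm : MapsTo γ (Icc 0 1) (Dext T) := by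
      rintro s ⟨hs0, hs1⟩
      refine ⟨?_, ?_, ?_, ?_⟩ <;> simp only [γ] <;> nlinarith
    have hγc : ContinuousOn (fun s => d (γ s)) (Icc 0 1) :=
      hdc.comp (by fun_prop) hγm
    have hz : EqOn (fun s => d (γ s)) (fun _ => 0) (Ioc 0 1) := fun s hs =>
      h0 _ (hγm (Ioc_subset_Icc_self hs)) (by
        simp only [γ]; nlinarith [mul_pos hs.1 hT])
    have hz' := hz.of_subset_closure hγc continuousOn_const Ioc_subset_Icc_self
      (by rw [closure_Ioc zero_ne_one])
    have := hz' (show (0 : ℝ) ∈ Icc (0 : ℝ) 1 by simp)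
    simpa [γ] using this
  -- inverse of the change to characteristic coordinates `ξ = x + t`, `η = t - x`
  let ψ : ℝ → ℝ → ℝ × ℝ := fun ξ η => ((ξ - η) / 2, (ξ + η) / 2)
  have hψ : ∀ ξ η, 0 ≤ η → η ≤ ξ → ξ ≤ 2 * T → ψ ξ η ∈ Dext T := by
    intro ξ η h1 h2 h3
    refine ⟨?_, ?_, ?_, ?_⟩ <;> simp only [ψ] <;> linarith
  let L : ℝ × ℝ → ℝ × ℝ →L[ℝ] Fin 2 → ℂ := fun z => fderivWithin ℝ d (Dext T) z
  have hL : ∀ z ∈ Dext T, HasFDerivWithinAt d (L z) (Dext T) z := fun z hz =>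
    (hd.differentiableOn one_ne_zero z hz).hasFDerivWithinAt
  -- both characteristic directions have the form `(m, 1 / 2)`
  have heq : ∀ z ∈ Dext T, ∀ (m : ℝ),
      L z (m, 1 / 2) = m • L z (1, 0) + (1 / 2 : ℝ) • L z (0, 1) := by
    intro z _ m
    rw [← map_smul, ← map_smul, ← map_add]
    simp
  let k₁ : ℝ → ℝ → ℂ := fun ξ η =>
    Complex.I / 2 * (p ((ξ - η) / 2) - Complex.I * q ((ξ - η) / 2))
  let k₂ : ℝ → ℝ → ℂ := fun ξ η =>
    Complex.I / 2 * (p ((ξ - η) / 2) + Complex.I * q ((ξ - η) / 2))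
  let a : ℝ → ℝ → ℂ := fun ξ η => (d (ψ ξ η) 0 - Complex.I * d (ψ ξ η) 1) / 2
  let b : ℝ → ℝ → ℂ := fun ξ η => (d (ψ ξ η) 0 + Complex.I * d (ψ ξ η) 1) / 2
  have hbc : ContinuousOn ↿b {z : ℝ × ℝ | 0 ≤ z.2 ∧ z.2 ≤ z.1 ∧ z.1 ≤ 2 * T} := by
    have h1 : ContinuousOn (fun z : ℝ × ℝ => d (ψ z.1 z.2))
        {z : ℝ × ℝ | 0 ≤ z.2 ∧ z.2 ≤ z.1 ∧ z.1 ≤ 2 * T} :=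
      hdc.comp (by fun_prop) fun z hz => hψ _ _ hz.1 hz.2.1 hz.2.2
    have h2 := continuousOn_pi.1 h1
    exact ((h2 0).add (continuousOn_const.mul (h2 1))).div_const 2
  have hk : ∀ x ∈ Icc 0 T, ‖(p x : ℂ)‖ ≤ P ∧ ‖Complex.I * (q x : ℂ)‖ ≤ Q := fun x hx => by
    rw [norm_mul, Complex.norm_I, one_mul, Complex.norm_real, Complex.norm_real]
    exact ⟨hP x hx, hQ x hx⟩
  have hkey := goursat_unique (M := 2 * T) (R := 1 / 2 * (P + Q)) (a := a) (b := b) (k₁ := k₁)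
    (k₂ := k₂) (by positivity) hbc
    (fun ξ η h1 h2 h3 => by
      have h := hk ((ξ - η) / 2) ⟨by linarith, by linarith⟩
      simp only [k₁]
      rw [norm_mul, norm_div, Complex.norm_I, Complex.norm_ofNat]
      gcongr
      exact (norm_sub_le _ _).trans (add_le_add h.1 h.2))
    (fun ξ η h1 h2 h3 => by
      have h := hk ((ξ - η) / 2) ⟨by linarith, by linarith⟩
      simp only [k₂]
      rw [norm_mul, norm_div, Complex.norm_I, Complex.norm_ofNat]
      gcongr
      exact (norm_add_le _ _).trans (add_le_add h.1 h.2))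
    (fun ξ η h1 h2 h3 => by
      have hz := hψ ξ η h1 h2 h3
      have hγ : HasDerivWithinAt (fun s => ψ s η) ((1 / 2 : ℝ), (1 / 2 : ℝ)) (Icc η (2 * T)) ξ :=
        (((hasDerivAt_id ξ).sub_const η).div_const 2).hasDerivWithinAt.prodMk
          (((hasDerivAt_id ξ).add_const η).div_const 2).hasDerivWithinAt
      have hc := (hL _ hz).comp_hasDerivWithinAt ξ hγ fun s hs => hψ s η h1 hs.1 hs.2
      rw [heq _ hz] at hc
      have hc' := hasDerivWithinAt_pi.1 hc
      refine (((hc' 0).sub ((hc' 1).const_mul Complex.I)).div_const 2).congr_deriv ?_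
      obtain ⟨e1, e2⟩ := (dirac_iff p q _ _ _ _).1 (hD _ hz)
      change Complex.I * L (ψ ξ η) (0, 1) 0 + L (ψ ξ η) (1, 0) 1 + _ = 0 at e1
      change Complex.I * L (ψ ξ η) (0, 1) 1 - L (ψ ξ η) (1, 0) 0 + _ = 0 at e2
      simp only [k₁, b, Pi.add_apply, Pi.smul_apply, Complex.real_smul]
      push_cast
      simp only [ψ] at e1 e2 ⊢
      linear_combination (-Complex.I / 4) * e1 - (1 / 4) * e2
        + (L ((ξ - η) / 2, (ξ + η) / 2) (0, 1) 0
          - p ((ξ - η) / 2) * d ((ξ - η) / 2, (ξ + η) / 2) 1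
          + q ((ξ - η) / 2) * d ((ξ - η) / 2, (ξ + η) / 2) 0
          + Complex.I * q ((ξ - η) / 2) * d ((ξ - η) / 2, (ξ + η) / 2) 1) / 4 * hI)
    (fun ξ η h1 h2 h3 => by
      have hz := hψ ξ η h1 h2 h3
      have hγ : HasDerivWithinAt (fun s => ψ ξ s) ((-1 / 2 : ℝ), (1 / 2 : ℝ)) (Icc 0 ξ) η :=
        (((hasDerivAt_id η).const_sub ξ).div_const 2).hasDerivWithinAt.prodMk
          (((hasDerivAt_id η).const_add ξ).div_const 2).hasDerivWithinAt
      have hc := (hL _ hz).comp_hasDerivWithinAt η hγ fun s hs => hψ ξ s hs.1 hs.2 h3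
      rw [heq _ hz] at hc
      have hc' := hasDerivWithinAt_pi.1 hc
      refine (((hc' 0).add ((hc' 1).const_mul Complex.I)).div_const 2).congr_deriv ?_
      obtain ⟨e1, e2⟩ := (dirac_iff p q _ _ _ _).1 (hD _ hz)
      change Complex.I * L (ψ ξ η) (0, 1) 0 + L (ψ ξ η) (1, 0) 1 + _ = 0 at e1
      change Complex.I * L (ψ ξ η) (0, 1) 1 - L (ψ ξ η) (1, 0) 0 + _ = 0 at e2
      simp only [k₂, a, Pi.add_apply, Pi.smul_apply, Complex.real_smul]
      push_cast
      simp only [ψ] at e1 e2 ⊢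
      linear_combination (-Complex.I / 4) * e1 + (1 / 4) * e2
        + (L ((ξ - η) / 2, (ξ + η) / 2) (0, 1) 0
          + p ((ξ - η) / 2) * d ((ξ - η) / 2, (ξ + η) / 2) 1
          - q ((ξ - η) / 2) * d ((ξ - η) / 2, (ξ + η) / 2) 0
          + Complex.I * q ((ξ - η) / 2) * d ((ξ - η) / 2, (ξ + η) / 2) 1) / 4 * hI)
    (fun η h1 h2 => by
      have h : d (ψ η η) 0 = 0 := by simpa [ψ] using hbd η ⟨h1, h2⟩
      simp only [a, b, h]; ring)
    (fun ξ h1 h2 => by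
      have h : d (ψ ξ 0) = 0 := by simpa [ψ] using hchar (ξ / 2) (by linarith) (by linarith)
      simp [b, h])
  intro z hz
  rcases lt_or_ge z.2 z.1 with h | h
  · exact h0 z hz h
  obtain ⟨h1, h2, h3, h4⟩ := hz
  obtain ⟨ha, hb⟩ := hkey (z.1 + z.2) (z.2 - z.1) (by linarith) (by linarith) (by linarith)
  have hψz : ψ (z.1 + z.2) (z.2 - z.1) = z := by ext <;> simp only [ψ] <;> ring
  simp only [a, b, hψz] at ha hb
  have hz0 : d z 0 = 0 := by linear_combination ha + hb
  have hz1 : d z 1 = 0 := by linear_combination Complex.I * (ha - hb) + d z 1 * hI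
  ext i
  fin_cases i
  · exact hz0
  · exact hz1

/-! ### Well-posedness -/

/-- Well-posedness of the extended problem on
`Σ^{2T} = {0 ≤ x ≤ T, x ≤ t ≤ 2T - x}`, with the Duhamel representation of the
unique classical solution. -/
theorem stmt4 (T : ℝ) (hT : 0 < T) (p q : ℝ → ℝ)
    (hp : ContDiffOn ℝ 1 p (Icc 0 T)) (hq : ContDiffOn ℝ 1 q (Icc 0 T)) :
    ∃ w : ℝ × ℝ → Fin 2 → ℂ,
      ContDiffOn ℝ 1 w (SigmaBar T) ∧
      (∀ t ∈ Icc (0 : ℝ) (2 * T), w (0, t) 0 = 0) ∧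
      ∀ f : ℝ → ℂ, (∀ t < (0 : ℝ), f t = 0) →
        ContDiffOn ℝ 1 f (Icc 0 (2 * T)) → f 0 = 0 → derivWithin f (Icc 0 (2 * T)) 0 = 0 →
        (ContDiffOn ℝ 1 (usol f w) (Dext T) ∧
          DiracOn p q (Dext T) (usol f w) ∧
          (∀ z ∈ Dext T, z.2 < z.1 → usol f w z = 0) ∧
          (∀ t ∈ Icc (0 : ℝ) (2 * T), usol f w (0, t) 0 = f t) ∧
          (∀ v : ℝ × ℝ → Fin 2 → ℂ, ContDiffOn ℝ 1 v (Dext T) →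
            DiracOn p q (Dext T) v →
            (∀ z ∈ Dext T, z.2 < z.1 → v z = 0) →
            (∀ t ∈ Icc (0 : ℝ) (2 * T), v (0, t) 0 = f t) →
            ∀ z ∈ Dext T, v z = usol f w z)) := by
  obtain ⟨p', hp', hpc, hpe⟩ := exists_contDiff_compact_extension hT hp
  obtain ⟨q', hq', hqc, hqe⟩ := exists_contDiff_compact_extension hT hq
  obtain ⟨W, hW, hW0, hWD, hWx⟩ := exists_kernel hp' hpc hq' hqc
  refine ⟨W, hW.contDiffOn, fun t _ => hW0 t, fun f hfneg hf hf0 hf1 => ?_⟩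
  obtain ⟨F, hF, hFe, hFneg⟩ :=
    exists_contDiff_extension (show (0 : ℝ) < 2 * T by linarith) hf
  -- left of `0` the extension `F` is affine with value and slope `0`, hence equal to `f` there too
  have hFf : ∀ t ≤ 2 * T, F t = f t := by
    intro t ht
    rcases lt_or_ge t 0 with h | h
    · rw [hFneg t h.le, hfneg t h, hf0, hf1, smul_zero, add_zero]
    · exact hFe ⟨h, ht⟩
  have hfz : ∀ t ≤ 0, f t = 0 := fun t ht => by
    rcases ht.lt_or_eq with h | h
    · exact hfneg t h
    · rw [h, hf0]
  have hud := uniqueDiffOn_Dext hT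
  -- on `D` only arguments of `f` that are at most `2 T` occur
  have hu : EqOn (usol f W) (usol F W) (Dext T) := by
    rintro ⟨x, t⟩ ⟨h1, h2, h3, h4⟩
    simp only at h1 h2 h3 h4
    rw [usol_eq, usol_eq, hFf (t - x) (by linarith)]
    congr 1
    refine intervalIntegral.integral_congr fun s hs => ?_
    have : s ≤ 2 * T := hs.2.trans (max_le (by linarith) (by simp only; linarith))
    simp only [hFf s this]
  obtain ⟨hcd, hDF⟩ := usol_solves hW hWD hWx hF
  have hcf : ContDiffOn ℝ 1 (usol f W) (Dext T) := hcd.contDiffOn.congr hu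
  have hDf : DiracOn p q (Dext T) (usol f W) := by
    intro z hz
    have h1 : fderivWithin ℝ (usol f W) (Dext T) z = fderiv ℝ (usol F W) z := by
      rw [fderivWithin_congr hu (hu hz)]
      exact ((hcd.differentiable one_ne_zero) z).fderivWithin (hud z hz)
    have h2 : Vmat p q z.1 = Vmat p' q' z.1 := by
      rw [Vmat, Vmat, hpe ⟨hz.1, hz.2.1⟩, hqe ⟨hz.1, hz.2.1⟩]
    rw [h1, h2, hu hz]
    exact hDF z
  have hzf : ∀ z ∈ Dext T, z.2 < z.1 → usol f W z = 0 := by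
    intro z _ hlt
    have h1 : ∫ s in (0 : ℝ)..(z.2 - z.1), f s • W (z.1, z.2 - s) = 0 := by
      refine (intervalIntegral.integral_congr (g := fun _ => 0) fun s hs => ?_).trans
        intervalIntegral.integral_zero
      have : s ≤ 0 := hs.2.trans (max_le le_rfl (by linarith))
      simp only [hfz s this, zero_smul]
    rw [usol_eq, h1, hfz _ (by linarith), zero_smul, add_zero]
  have hbf : ∀ t ∈ Icc (0 : ℝ) (2 * T), usol f W (0, t) 0 = f t := by
    intro t ht
    have hz : ((0 : ℝ), t) ∈ Dext T := ⟨le_rfl, hT.le, ht.1, by simpa using ht.2⟩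
    have hFc := hF.continuous
    have hWc := hW.continuous
    have hc : Continuous fun s => F (t - s) • W (0, s) := by fun_prop
    have h1 : (∫ s in (0 : ℝ)..t, F (t - s) • W (0, s)) 0 = 0 := by
      have h2 := (ContinuousLinearMap.proj (R := ℝ) (φ := fun _ : Fin 2 => ℂ)
        0).intervalIntegral_comp_comm (hc.intervalIntegrable (μ := volume) 0 t)
      refine h2.symm.trans ?_
      simp [hW0]
    rw [hu hz, usol, Pi.add_apply]
    simp only
    rw [h1, ← hFf t ht.2]
    simp
  refine ⟨hcf, hDf, hzf, hbf, fun v hv hDv hzv hbv z hz => ?_⟩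
  refine sub_eq_zero.1 (homogeneous_unique hT hp.continuousOn hq.continuousOn
    (d := fun z => v z - usol f W z) (hv.sub hcf) (fun z hz => ?_) (fun z hz hlt => ?_)
    (fun t ht => ?_) z hz)
  · have h1 := hDv z hz
    have h2 := hDf z hz
    rw [fderivWithin_fun_sub (hud z hz) (hv.differentiableOn one_ne_zero z hz)
      (hcf.differentiableOn one_ne_zero z hz)]
    simp only [sub_apply, Matrix.mulVec_sub, smul_sub]
    rw [← sub_eq_zero.2 (h1.trans h2.symm)]
    abel
  · simp only [hzv z hz hlt, hzf z hz hlt, sub_self]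
  · simp only [Pi.sub_apply, hbv t ht, hbf t ht, sub_self]
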